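/- The gap label set G_b is the orbit of the two points (b+1)/(2(b+2)) and (b+3)/(2(b+2)) under the iterated function system {Q_0, Q_1, Q_2}; explicitly, G_b = ⋃_{n≥0} { Q_{w_1} ∘ ⋯ ∘ Q_{w_n}(y) : (w_1,…,w_n) ∈ {0,1,2}^n, y ∈ {(b+1)/(2(b+2)), (b+3)/(2(b+2))} }, and equivalently G_b is the smallest subset of ℝ that contains (b+1)/(2(b+2)) and (b+3)/(2(b+2)) and is closed under each of the maps Q_0, Q_1, Q_2. -/

import Mathlib

open Set

/-- The gap label set
`G_b = {(b+1+2w_k)/(2(b+2)^k) + ((b+1)/2)·Σ_{j=1}^{k−1} w_j/(b+2)^j}` over all `k ≥ 1`,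
`w_1,…,w_{k−1} ∈ {0,1,2}`, `w_k ∈ {0,1}`. -/
noncomputable def Gb (b : ℕ) : Set ℝ :=
  {y : ℝ | ∃ (k : ℕ) (w : ℕ → ℕ), 1 ≤ k ∧
    (∀ j : ℕ, 1 ≤ j → j ≤ k - 1 → w j ∈ ({0, 1, 2} : Set ℕ)) ∧
    w k ∈ ({0, 1} : Set ℕ) ∧
    y = ((b : ℝ) + 1 + 2 * (w k : ℝ)) / (2 * ((b : ℝ) + 2) ^ k) +
      (((b : ℝ) + 1) / 2) * ∑ j ∈ Finset.Icc 1 (k - 1), (w j : ℝ) / ((b : ℝ) + 2) ^ j}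

/-- The maps `Q_0, Q_1, Q_2` of the gap-label iterated function system. -/
noncomputable def Qmap (b : ℕ) : Fin 3 → ℝ → ℝ
  | 0 => fun y => y / ((b : ℝ) + 2)
  | 1 => fun y => 1 / 2 + (1 - 2 * y) / (2 * ((b : ℝ) + 2))
  | 2 => fun y => 1 + (y - 1) / ((b : ℝ) + 2)

/-- The two starting gap labels `(b+1)/(2(b+2))` and `(b+3)/(2(b+2))`. -/
noncomputable def gapBase (b : ℕ) : Set ℝ :=
  {((b : ℝ) + 1) / (2 * ((b : ℝ) + 2)), ((b : ℝ) + 3) / (2 * ((b : ℝ) + 2))}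

/-- Formula for the label with `k = m + 1`. -/
noncomputable def labelVal (b : ℕ) (m : ℕ) (w : ℕ → ℕ) : ℝ :=
  ((b : ℝ) + 1 + 2 * (w (m + 1) : ℝ)) / (2 * ((b : ℝ) + 2) ^ (m + 1)) +
      (((b : ℝ) + 1) / 2) * ∑ j ∈ Finset.Icc 1 m, (w j : ℝ) / ((b : ℝ) + 2) ^ j

/-- The orientation-preserving shift. -/
noncomputable def Pmap (b : ℕ) (i : ℕ) (y : ℝ) : ℝ :=
  (y + (i : ℝ) * (((b : ℝ) + 1) / 2)) / ((b : ℝ) + 2)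

lemma sum_shift (B : ℝ) (hB : B ≠ 0) (w : ℕ → ℕ) (m : ℕ) :
    ∑ j ∈ Finset.Icc 1 (m + 1), (w j : ℝ) / B ^ j =
      ((w 1 : ℝ) + ∑ j ∈ Finset.Icc 1 m, (w (j + 1) : ℝ) / B ^ j) / B := by
  induction m with
  | zero => simp
  | succ n ih =>
    rw [Finset.sum_Icc_succ_top (by omega), ih, Finset.sum_Icc_succ_top (by omega)]
    field_simp
    ring

lemma labelVal_succ (b m : ℕ) (w : ℕ → ℕ) :
    labelVal b (m + 1) w = Pmap b (w 1) (labelVal b m (fun j => w (j + 1))) := by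
  have hB : (b : ℝ) + 2 ≠ 0 := by positivity
  unfold labelVal Pmap
  rw [sum_shift _ hB]
  field_simp
  ring

lemma mem_Gb (b : ℕ) (y : ℝ) : y ∈ Gb b ↔ ∃ (m : ℕ) (w : ℕ → ℕ),
    (∀ j, 1 ≤ j → j ≤ m → w j ≤ 2) ∧ w (m + 1) ≤ 1 ∧ y = labelVal b m w := by
  have h3 : ∀ n : ℕ, n ∈ ({0, 1, 2} : Set ℕ) ↔ n ≤ 2 := by
    intro n; simp only [mem_insert_iff, mem_singleton_iff]; omega
  have h2 : ∀ n : ℕ, n ∈ ({0, 1} : Set ℕ) ↔ n ≤ 1 := by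
    intro n; simp only [mem_insert_iff, mem_singleton_iff]; omega
  simp only [Gb, mem_ofPred_eq, h3, h2]
  constructor
  · rintro ⟨k, w, hk, h, h', rfl⟩
    obtain ⟨m, rfl⟩ : ∃ m, k = m + 1 := ⟨k - 1, by omega⟩
    exact ⟨m, w, h, h', rfl⟩
  · rintro ⟨m, w, h, h', rfl⟩
    exact ⟨m + 1, w, by omega, h, h', rfl⟩

lemma labelVal_zero (b : ℕ) (w : ℕ → ℕ) (h : w 1 ≤ 1) : labelVal b 0 w ∈ gapBase b := by
  unfold labelVal gapBase
  have : w 1 = 0 ∨ w 1 = 1 := by omega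
  rcases this with h | h
  · left; simp [h]
  · right; simp [h]; ring

lemma base_sub (b : ℕ) : gapBase b ⊆ Gb b := by
  intro y hy
  rw [mem_Gb]
  rcases hy with rfl | rfl
  · exact ⟨0, fun _ => 0, by simp, by simp, by simp [labelVal]⟩
  · exact ⟨0, fun _ => 1, by simp, by simp, by simp [labelVal]; ring⟩

lemma Pmap_mem (b i : ℕ) (hi : i ≤ 2) (y : ℝ) (hy : y ∈ Gb b) : Pmap b i y ∈ Gb b := by
  rw [mem_Gb] at hy ⊢
  obtain ⟨m, w, h, h', rfl⟩ := hy
  refine ⟨m + 1, fun j => if j = 1 then i else w (j - 1), ?_, ?_, ?_⟩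
  · intro j h1 h2
    dsimp only
    split_ifs with hj
    · exact hi
    · exact h _ (by omega) (by omega)
  · simpa using h'
  · rw [labelVal_succ]
    simp only [if_true]
    congr 1
    unfold labelVal
    have hs : ∑ j ∈ Finset.Icc 1 m, (w j : ℝ) / ((b : ℝ) + 2) ^ j =
        ∑ j ∈ Finset.Icc 1 m,
          ((if j + 1 = 1 then i else w (j + 1 - 1) : ℕ) : ℝ) / ((b : ℝ) + 2) ^ j := by
      refine Finset.sum_congr rfl fun j hj => ?_
      have : j ≠ 0 := by
        have := (Finset.mem_Icc.mp hj).1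
        omega
      simp [this]
    rw [hs]
    simp

lemma Gb_induct (b : ℕ) (S : Set ℝ) (h0 : gapBase b ⊆ S)
    (hP : ∀ y ∈ S, ∀ i ≤ 2, Pmap b i y ∈ S) : Gb b ⊆ S := by
  intro y hy
  rw [mem_Gb] at hy
  obtain ⟨m, w, h, h', rfl⟩ := hy
  induction m generalizing w with
  | zero => exact h0 (labelVal_zero b w h')
  | succ n ih =>
    rw [labelVal_succ]
    exact hP _ (ih _ (fun j h1 h2 => h (j + 1) (by omega) (by omega)) h') _ (h 1 le_rfl (by omega))

lemma base_refl (b : ℕ) (y : ℝ) (hy : y ∈ gapBase b) : 1 - y ∈ gapBase b := by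
  have hB : (b : ℝ) + 2 ≠ 0 := by positivity
  rcases hy with rfl | rfl
  · right; show _ = _; field_simp; ring
  · left; show _ = _; field_simp; ring

lemma Pmap_refl (b i : ℕ) (hi : i ≤ 2) (y : ℝ) : 1 - Pmap b i y = Pmap b (2 - i) (1 - y) := by
  have hB : (b : ℝ) + 2 ≠ 0 := by positivity
  unfold Pmap
  rw [Nat.cast_sub hi]
  field_simp
  push_cast
  ring

lemma Gb_refl (b : ℕ) (y : ℝ) (hy : y ∈ Gb b) : 1 - y ∈ Gb b := by
  refine Gb_induct b {y | 1 - y ∈ Gb b} (fun y hy => base_sub b (base_refl b y hy)) ?_ hy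
  intro y hy i hi
  show 1 - Pmap b i y ∈ Gb b
  rw [Pmap_refl b i hi]
  exact Pmap_mem b _ (by omega) _ hy

lemma Q0 (b : ℕ) (y : ℝ) : Qmap b 0 y = Pmap b 0 y := by
  simp [Qmap, Pmap]

lemma Q1 (b : ℕ) (y : ℝ) : Qmap b 1 y = Pmap b 1 (1 - y) := by
  have hB : (b : ℝ) + 2 ≠ 0 := by positivity
  simp only [Qmap, Pmap]
  field_simp
  push_cast
  ring

lemma Q2 (b : ℕ) (y : ℝ) : Qmap b 2 y = Pmap b 2 y := by
  have hB : (b : ℝ) + 2 ≠ 0 := by positivity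
  simp only [Qmap, Pmap]
  field_simp
  push_cast
  ring

lemma Q_mem (b : ℕ) (y : ℝ) (hy : y ∈ Gb b) (i : Fin 3) : Qmap b i y ∈ Gb b := by
  fin_cases i
  · show Qmap b 0 y ∈ _
    rw [Q0]; exact Pmap_mem b _ (by omega) _ hy
  · show Qmap b 1 y ∈ _
    rw [Q1]; exact Pmap_mem b _ (by omega) _ (Gb_refl b y hy)
  · show Qmap b 2 y ∈ _
    rw [Q2]; exact Pmap_mem b _ (by omega) _ hy

lemma Gb_min (b : ℕ) (S : Set ℝ) (h0 : gapBase b ⊆ S)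
    (hQ : ∀ y ∈ S, ∀ i : Fin 3, Qmap b i y ∈ S) : Gb b ⊆ S := by
  have key : ∀ y, y ∈ S → 1 - y ∈ S → ∀ i ≤ 2, Pmap b i y ∈ S := by
    intro y h1 h2 i hi
    interval_cases i
    · rw [← Q0]; exact hQ _ h1 _
    · have := hQ _ h2 1
      rwa [Q1, sub_sub_cancel] at this
    · rw [← Q2]; exact hQ _ h1 _
  have : Gb b ⊆ {y | y ∈ S ∧ 1 - y ∈ S} := by
    refine Gb_induct b _ (fun y hy => ⟨h0 hy, h0 (base_refl b y hy)⟩) ?_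
    rintro y ⟨h1, h2⟩ i hi
    refine ⟨key y h1 h2 i hi, ?_⟩
    rw [Pmap_refl b i hi]
    exact key _ h2 (by rwa [sub_sub_cancel]) _ (by omega)
  exact fun y hy => (this hy).1

/-- `G_b` is the orbit of `{(b+1)/(2(b+2)), (b+3)/(2(b+2))}` under the iterated
function system `{Q_0, Q_1, Q_2}`: explicitly it is the set of all values
`Q_{w_1} ∘ ⋯ ∘ Q_{w_n}(y)` with `y` in the base set, and equivalently it is the
smallest subset of `ℝ` containing the base set and closed under each `Q_i`. -/
theorem gap_labels_are_IFS_orbit (b : ℕ) (hb : 2 ≤ b) :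
    (Gb b = {y : ℝ | ∃ (l : List (Fin 3)) (y₀ : ℝ), y₀ ∈ gapBase b ∧
        y = l.foldr (fun i acc => Qmap b i acc) y₀}) ∧
    gapBase b ⊆ Gb b ∧
    (∀ y ∈ Gb b, ∀ i : Fin 3, Qmap b i y ∈ Gb b) ∧
    (∀ S : Set ℝ, gapBase b ⊆ S → (∀ y ∈ S, ∀ i : Fin 3, Qmap b i y ∈ S) →
      Gb b ⊆ S) := by
  refine ⟨?_, base_sub b, fun y hy i => Q_mem b y hy i, Gb_min b⟩
  apply Subset.antisymm
  · apply Gb_min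
    · intro y hy
      exact ⟨[], y, hy, rfl⟩
    · rintro y ⟨l, y₀, h, rfl⟩ i
      exact ⟨i :: l, y₀, h, rfl⟩
  · rintro y ⟨l, y₀, h, rfl⟩
    induction l with
    | nil => exact base_sub b h
    | cons i l ih => exact Q_mem b _ ih i
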